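/- arXiv:2112.01674 — 5 statements merged into one kernel-verified Lean document; each statement's English description precedes it below -/
import Mathlib

section
/- (Local multiplicity inequality from the proof of the main theorem.) Let h0 ∈ ℝ, let m ≥ 1, and let M, G, F̃ be real functions defined on a neighborhood of h0 of the form M(h) = (h−h0)^l · m̃(h), G(h) = (h−h0)^a · g(h), F̃(h) = (h−h0)^t · f(h), where l, t ≥ 0 are integers, a ≥ 1 is an integer, m̃, g, f are continuous at h0 and of class at least C^m near h0 with m̃(h0) ≠ 0, g(h0) ≠ 0, f(h0) ≠ 0. If (M(h)/G(h))^{(m)} = F̃(h)/G(h)^{m+1} for all h with 0 < |h − h0| sufficiently small, then l ≤ t − m·a + m; in particular l ≤ t. -/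
/-! Write `x = h - h0`. Off `h0`, `M / G = x ^ (l - a) * u` with `u = mt / g` of class `C^m`. Each
differentiation lowers the exponent of `x` by exactly one and keeps the cofactor regular, since
`(x ^ k * u)' = x ^ (k - 1) * (k * u + x * u')`; so the `m`-th derivative is
`x ^ (l - a - m) * w` with `w` continuous at `h0` (`iteratedDeriv_zpow_mul`). The right-hand side is
`x ^ (t - a * (m + 1)) * v` with `v = f / g ^ (m + 1)` continuous and nonzero at `h0`, so its exponent
cannot be smaller than `l - a - m` (`zpow_exponent_le`). Rearranging gives the first inequality,
and the second follows from `m ≤ m * a`.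
-/

open Set Filter

open scoped Topology

/-- Differentiating a function of the form `x ^ k * u` off the origin `m` times, with `u` of class
`C^m`, gives a function of the form `x ^ (k - m) * w` with `w` continuous at `h0`.
No claim is made that
`w h0 ≠ 0`: it does vanish when `0 ≤ k < m`. -/
lemma iteratedDeriv_zpow_mul (h0 : ℝ) (m : ℕ) :
    ∀ (k : ℤ) (u Q : ℝ → ℝ), ContDiffAt ℝ m u h0 →
      (∀ᶠ h in 𝓝[≠] h0, Q h = (h - h0) ^ k * u h) →
      ∃ w : ℝ → ℝ, ContinuousAt w h0 ∧
        ∀ᶠ h in 𝓝[≠] h0, iteratedDeriv m Q h = (h - h0) ^ (k - m) * w h := by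
  induction m with
  | zero =>
    intro k u Q hu hQ
    exact ⟨u, hu.continuousAt, by simpa using hQ⟩
  | succ m ih =>
    intro k u Q hu hQ
    have hu' : ContDiffAt ℝ m (deriv u) h0 :=
      hu.derivWithin (by push_cast; exact le_rfl)
    have hdiff : ∀ᶠ h in 𝓝[≠] h0, DifferentiableAt ℝ u h := by
      have h1 : ContDiffAt ℝ 1 u h0 := hu.of_le (by exact_mod_cast Nat.le_add_left 1 m)
      refine ((h1.eventually (by simp)).mono fun h hh => ?_).filter_mono nhdsWithin_le_nhds
      exact hh.differentiableAt (by simp)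
    have hstep : ∀ᶠ h in 𝓝[≠] h0,
        deriv Q h = (h - h0) ^ (k - 1) * ((k : ℝ) * u h + (h - h0) * deriv u h) := by
      -- a punctured neighbourhood is open, so the formula for `Q` may be differentiated on it
      filter_upwards [eventually_eventually_nhdsWithin.2 hQ, hdiff, self_mem_nhdsWithin]
        with h hQh hd hne
      have hne' : h ≠ h0 := hne
      have hx : h - h0 ≠ 0 := sub_ne_zero.2 hne'
      rw [isOpen_compl_singleton.nhdsWithin_eq hne] at hQh
      have hz : HasDerivAt (fun y : ℝ => (y - h0) ^ k) (k * (h - h0) ^ (k - 1)) h := by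
        simpa using (hasDerivAt_zpow k (h - h0) (Or.inl hx)).comp_sub_const h h0
      rw [EventuallyEq.deriv_eq hQh, (hz.fun_mul hd.hasDerivAt).deriv]
      have : (h - h0) ^ k = (h - h0) ^ (k - 1) * (h - h0) := by
        rw [← zpow_add_one₀ hx, sub_add_cancel]
      rw [this]
      ring
    have hreg : ContDiffAt ℝ m (fun h => (k : ℝ) * u h + (h - h0) * deriv u h) h0 :=
      (contDiffAt_const.mul (hu.of_le (by exact_mod_cast Nat.le_succ m))).add
        ((contDiffAt_id.sub contDiffAt_const).mul hu')
    obtain ⟨w, hw, hw'⟩ := ih (k - 1) _ (deriv Q) hreg hstep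
    refine ⟨w, hw, hw'.mono fun h hh => ?_⟩
    rw [iteratedDeriv_succ', hh]
    congr 2
    push_cast
    ring

/-- Comparison of orders: if `x ^ s * v = x ^ r * w` off the origin, with `v` and `w` continuous at
the origin and `v` nonvanishing there, then `r ≤ s`, for otherwise `v = x ^ (r - s) * w → 0`. -/
lemma zpow_exponent_le {h0 : ℝ} {r s : ℤ} {v w : ℝ → ℝ} (hv : ContinuousAt v h0)
    (hw : ContinuousAt w h0) (hv0 : v h0 ≠ 0)
    (h : ∀ᶠ y in 𝓝[≠] h0, (y - h0) ^ r * w y = (y - h0) ^ s * v y) : r ≤ s := by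
  by_contra! hlt
  obtain ⟨n, hn⟩ := Int.eq_ofNat_of_zero_le (sub_nonneg.2 hlt.le)
  have hn0 : n ≠ 0 := by omega
  have heq : ∀ᶠ y in 𝓝[≠] h0, (y - h0) ^ n * w y = v y := by
    filter_upwards [h, self_mem_nhdsWithin] with y hy hne
    have hx : y - h0 ≠ 0 := sub_ne_zero.2 hne
    have hr : r = s + n := by omega
    rw [hr, zpow_add₀ hx, zpow_natCast, mul_assoc] at hy
    exact mul_left_cancel₀ (zpow_ne_zero s hx) hy
  have hc : ContinuousAt (fun y => (y - h0) ^ n * w y) h0 := by fun_prop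
  have h1 := (hc.tendsto.mono_left nhdsWithin_le_nhds).congr' heq
  have h2 := tendsto_nhds_unique h1 (hv.tendsto.mono_left nhdsWithin_le_nhds)
  simp [hn0] at h2
  exact hv0 h2.symm

theorem local_multiplicity_inequality
    (h0 : ℝ) (m : ℕ) (hm : 1 ≤ m) (l t a : ℕ) (ha : 1 ≤ a)
    (M G F mt g f : ℝ → ℝ) (U : Set ℝ) (hU : U ∈ nhds h0)
    (hMform : ∀ h ∈ U, M h = (h - h0) ^ l * mt h)
    (hGform : ∀ h ∈ U, G h = (h - h0) ^ a * g h)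
    (hFform : ∀ h ∈ U, F h = (h - h0) ^ t * f h)
    (hmt : ContDiffOn ℝ m mt U) (hg : ContDiffOn ℝ m g U) (hf : ContDiffOn ℝ m f U)
    (hmtc : ContinuousAt mt h0) (hgc : ContinuousAt g h0) (hfc : ContinuousAt f h0)
    (hmt0 : mt h0 ≠ 0) (hg0 : g h0 ≠ 0) (hf0 : f h0 ≠ 0)
    (heq : ∀ᶠ h in nhdsWithin h0 {h0}ᶜ,
      iteratedDeriv m (fun x => M x / G x) h = F h / (G h) ^ (m + 1)) :
    (l : ℤ) ≤ (t : ℤ) - (m : ℤ) * (a : ℤ) + (m : ℤ) ∧ l ≤ t := by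
  have hu : ContDiffAt ℝ m (fun h => mt h / g h) h0 :=
    (hmt.contDiffAt hU).div (hg.contDiffAt hU) hg0
  have hU' : ∀ᶠ h in 𝓝[≠] h0, h ∈ U := nhdsWithin_le_nhds hU
  have hQ : ∀ᶠ h in 𝓝[≠] h0,
      M h / G h = (h - h0) ^ ((l : ℤ) - a) * (mt h / g h) := by
    filter_upwards [hU', self_mem_nhdsWithin] with h hh hne
    rw [hMform h hh, hGform h hh, zpow_sub₀ (sub_ne_zero.2 hne), zpow_natCast, zpow_natCast,
      mul_div_mul_comm]
  obtain ⟨w, hw, hw'⟩ := iteratedDeriv_zpow_mul h0 m _ _ _ hu hQ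
  have key : ((l : ℤ) - a) - m ≤ (t : ℤ) - (a * (m + 1) : ℕ) := by
    refine zpow_exponent_le (v := fun h => f h / g h ^ (m + 1))
      (hfc.div (hgc.pow _) (pow_ne_zero _ hg0)) hw (div_ne_zero hf0 (pow_ne_zero _ hg0)) ?_
    filter_upwards [hU', hw', heq, self_mem_nhdsWithin] with h hh h1 h2 hne
    rw [← h1, h2, hFform h hh, hGform h hh, zpow_sub₀ (sub_ne_zero.2 hne), zpow_natCast,
      zpow_natCast, mul_pow, ← pow_mul, mul_div_mul_comm]
  have hfirst : (l : ℤ) ≤ (t : ℤ) - (m : ℤ) * (a : ℤ) + (m : ℤ) := by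
    push_cast at key
    linarith
  refine ⟨hfirst, ?_⟩
  have hma : (m : ℤ) ≤ m * a := by exact_mod_cast Nat.le_mul_of_pos_right m ha
  omega
end

section
/- (Upper bound in Theorem 3.1 for cases 1–3.) Let n ≥ 2 be an integer. Let M : (0,1) → ℝ be given by M(h) = Σ_{i=0}^{n+1} u_i (1−h)^{i+1} + Σ_{i=1}^{n} v_i h^i (1−h) + Σ_{i=1}^{⌊(n+1)/2⌋} r_i h^i (1−h) ln h, for arbitrary real coefficients u_i, v_i, r_i. Then M has at most n + 2 + ⌊(n+1)/2⌋ zeros on (0,1) counting multiplicity. -/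
/-!
On `(0, 1)` one has `M h = (1 - h) * F h` with `F h = P h + ∑ i ∈ [1, m], r i * h ^ i * log h`, where
`P` is a polynomial of degree at most `n + 1` and `m = ⌊(n + 1) / 2⌋`. As `1 - h` does not vanish,
`M` and `F` have the same zeros with the same multiplicities.

Differentiating `n + 2` times kills `P` and, since `m < n + 2`, turns each `h ^ i * log h` into a
nonzero multiple of `h ^ (i - (n + 2))` (`exists_iteratedDeriv_pow_mul_log`). Hence
`h ^ (n + 2) * F⁽ⁿ⁺²⁾ h` is a polynomial of degree at most `m`, nonzero unless all `r i` vanish, so it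
has at most `m` zeros with multiplicity. By Rolle's theorem with multiplicities (`HasZeros.deriv`)
each differentiation loses at most one zero, so `F` has at most `n + 2 + m` zeros. If all `r i`
vanish, `F = P` has at most `n + 1` zeros, unless it is zero identically, and then `M` has no zero of
finite multiplicity.
-/

/-- `f` has at most `N` zeros on `I` counting multiplicity: for any finitely many
distinct points of `I` that are zeros of `f` with multiplicities `l x`, the sum of
the multiplicities is at most `N`. -/
def ZerosLE (f : ℝ → ℝ) (I : Set ℝ) (N : ℕ) : Prop :=
  ∀ (s : Finset ℝ) (l : ℝ → ℕ),
    (↑s : Set ℝ) ⊆ I →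
    (∀ x ∈ s, 1 ≤ l x ∧ (∀ j < l x, iteratedDeriv j f x = 0) ∧
      iteratedDeriv (l x) f x ≠ 0) →
    ∑ x ∈ s, l x ≤ N

open Set Polynomial
open scoped ContDiff

/-! ### Zeros with multiplicity and Rolle's theorem -/

/-- `f` has at least `k` zeros in `(0, 1)` counted with multiplicity. Multiplicities are only
bounded below: the derivatives of `f` of order less than `l x` (starting with `f` itself) vanish at
`x`, with no condition on the derivative of order `l x`. -/
def HasZeros (f : ℝ → ℝ) (k : ℕ) : Prop :=
  ∃ (s : Finset ℝ) (l : ℝ → ℕ), (↑s : Set ℝ) ⊆ Ioo 0 1 ∧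
    (∀ x ∈ s, ∀ j < l x, iteratedDeriv j f x = 0) ∧ k ≤ ∑ x ∈ s, l x

lemma HasZeros.mono {f : ℝ → ℝ} {j k : ℕ} (h : HasZeros f k) (hjk : j ≤ k) : HasZeros f j :=
  let ⟨s, l, hs, hl, hk⟩ := h
  ⟨s, l, hs, hl, hjk.trans hk⟩

/-- Multiplication by a smooth function does not decrease the order of vanishing. -/
lemma HasZeros.of_mul {f g c : ℝ → ℝ} {k : ℕ} (h : HasZeros f k)
    (hf : ContDiffOn ℝ ∞ f (Ioo 0 1)) (hc : ContDiffOn ℝ ∞ c (Ioo 0 1))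
    (hg : EqOn g (c * f) (Ioo 0 1)) : HasZeros g k := by
  obtain ⟨s, l, hs, hl, hk⟩ := h
  refine ⟨s, l, hs, fun x hx j hj => ?_, hk⟩
  have hI : Ioo (0 : ℝ) 1 ∈ nhds x := isOpen_Ioo.mem_nhds (hs hx)
  rw [hg.iteratedDeriv_of_isOpen isOpen_Ioo j (hs hx),
    iteratedDeriv_mul ((hc.contDiffAt hI).of_le (by exact_mod_cast le_top))
      ((hf.contDiffAt hI).of_le (by exact_mod_cast le_top))]
  refine Finset.sum_eq_zero fun i _ => ?_
  rw [hl x hx (j - i) (by omega), mul_zero]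

/-- Rolle's theorem with multiplicities: each zero of `f` loses one order in `deriv f`, and `deriv f`
gains a zero between any two consecutive zeros of `f`. -/
lemma HasZeros.deriv {f : ℝ → ℝ} {k : ℕ} (h : HasZeros f (k + 1))
    (hf : ContinuousOn f (Ioo 0 1)) : HasZeros (deriv f) k := by
  classical
  obtain ⟨s₀, l, hs₀, hl₀, hk⟩ := h
  set s := s₀.filter (fun x => l x ≠ 0) with hs_def
  have hs : (↑s : Set ℝ) ⊆ Ioo 0 1 := fun x hx => hs₀ (Finset.mem_filter.1 hx).1
  have hl : ∀ x ∈ s, ∀ j < l x, iteratedDeriv j f x = 0 :=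
    fun x hx => hl₀ x (Finset.mem_filter.1 hx).1
  have hpos : ∀ x ∈ s, 1 ≤ l x := fun x hx => Nat.one_le_iff_ne_zero.2 (Finset.mem_filter.1 hx).2
  have hk' : k + 1 ≤ ∑ x ∈ s, l x := by rwa [hs_def, Finset.sum_filter_ne_zero]
  have hz : ∀ x ∈ s, f x = 0 := fun x hx => by simpa using hl x hx 0 (hpos x hx)
  have rolle : ∀ x y : ℝ, ∃ c, x ∈ s → y ∈ s → x < y → c ∈ Ioo x y ∧ _root_.deriv f c = 0 := by
    intro x y
    by_cases hxy : x ∈ s ∧ y ∈ s ∧ x < y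
    · obtain ⟨hx, hy, hlt⟩ := hxy
      obtain ⟨c, hc, hc'⟩ := exists_deriv_eq_zero hlt
        (hf.mono (Icc_subset_Ioo (hs hx).1 (hs hy).2)) ((hz x hx).trans (hz y hy).symm)
      exact ⟨c, fun _ _ _ => ⟨hc, hc'⟩⟩
    · exact ⟨0, fun hx hy hlt => (hxy ⟨hx, hy, hlt⟩).elim⟩
  choose c hc using rolle
  set t : Finset ℝ := ((s ×ˢ s).filter (fun p => p.1 < p.2)).image (fun p => c p.1 p.2) with ht
  have htz : ∀ z ∈ t, z ∈ Ioo (0 : ℝ) 1 ∧ _root_.deriv f z = 0 := by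
    intro z hz
    obtain ⟨p, hp, rfl⟩ := Finset.mem_image.1 hz
    obtain ⟨hp, hlt⟩ := Finset.mem_filter.1 hp
    obtain ⟨h1, h2⟩ := Finset.mem_product.1 hp
    obtain ⟨hI, h0⟩ := hc _ _ h1 h2 hlt
    exact ⟨⟨(hs h1).1.trans hI.1, hI.2.trans (hs h2).2⟩, h0⟩
  have hcard : s.card ≤ (t \ s).card + 1 := by
    refine Finset.card_le_sdiff_of_interleaved fun x hx y hy hlt _ => ?_
    refine ⟨c x y, Finset.mem_image.2 ⟨(x, y), ?_, rfl⟩, (hc x y hx hy hlt).1.1,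
      (hc x y hx hy hlt).1.2⟩
    simp [hx, hy, hlt]
  refine ⟨s ∪ (t \ s), fun x => if x ∈ s then l x - 1 else 1, ?_, ?_, ?_⟩
  · intro x hx
    rcases Finset.mem_union.1 hx with hx | hx
    · exact hs hx
    · exact (htz x (Finset.mem_sdiff.1 hx).1).1
  · intro x hx j hj
    rcases Finset.mem_union.1 hx with hx | hx
    · simp only [hx, if_true] at hj
      rw [← iteratedDeriv_succ']
      exact hl x hx _ (by omega)
    · obtain ⟨hxt, hxs⟩ := Finset.mem_sdiff.1 hx
      simp only [hxs, if_false] at hj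
      obtain rfl : j = 0 := by omega
      simpa using (htz x hxt).2
  · rw [Finset.sum_union Finset.disjoint_sdiff,
      Finset.sum_congr rfl (fun x hx => if_pos hx),
      Finset.sum_congr (s₁ := t \ s) rfl (fun x hx => if_neg (Finset.mem_sdiff.1 hx).2)]
    have : ∑ x ∈ s, (l x - 1) + s.card = ∑ x ∈ s, l x := by
      rw [Finset.card_eq_sum_ones, ← Finset.sum_add_distrib]
      exact Finset.sum_congr rfl fun x hx => Nat.sub_add_cancel (hpos x hx)
    simp only [Finset.sum_const, smul_eq_mul, mul_one]
    omega

lemma contDiffOn_deriv_Ioo {f : ℝ → ℝ} (hf : ContDiffOn ℝ ∞ f (Ioo 0 1)) :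
    ContDiffOn ℝ ∞ (deriv f) (Ioo 0 1) :=
  hf.deriv_of_isOpen isOpen_Ioo (by simp)

lemma HasZeros.iteratedDeriv (d : ℕ) : ∀ {f : ℝ → ℝ} {k : ℕ}, HasZeros f (k + d) →
    ContDiffOn ℝ ∞ f (Ioo 0 1) →
    HasZeros (iteratedDeriv d f) k ∧ ContDiffOn ℝ ∞ (_root_.iteratedDeriv d f) (Ioo 0 1) := by
  induction d with
  | zero => intro f k h hf; simpa using ⟨h, hf⟩
  | succ d ih =>
    intro f k h hf
    rw [iteratedDeriv_succ']
    exact ih (HasZeros.deriv h hf.continuousOn) (contDiffOn_deriv_Ioo hf)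

/-! ### Zeros of polynomials -/

lemma contDiff_polynomial (p : ℝ[X]) : ContDiff ℝ ∞ (fun x => p.eval x) := by
  simpa using p.contDiff_aeval (𝕜 := ℝ) ∞

lemma iteratedDeriv_polynomial (p : ℝ[X]) (j : ℕ) :
    iteratedDeriv j (fun x => p.eval x) = fun x => (derivative^[j] p).eval x := by
  induction j generalizing p with
  | zero => simp
  | succ j ih =>
    have : deriv (fun x => p.eval x) = fun x => p.derivative.eval x := by ext x; simp
    rw [iteratedDeriv_succ', this, ih, Function.iterate_succ_apply]

lemma HasZeros.le_natDegree {p : ℝ[X]} {k : ℕ} (h : HasZeros (fun x => p.eval x) k)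
    (hp : p ≠ 0) : k ≤ p.natDegree := by
  classical
  obtain ⟨s, l, -, hl, hk⟩ := h
  have hle : ∀ x ∈ s, l x ≤ p.roots.count x := by
    intro x hx
    rw [count_roots]
    rcases Nat.eq_zero_or_pos (l x) with h0 | h0
    · omega
    · have : l x - 1 < p.rootMultiplicity x := by
        rw [lt_rootMultiplicity_iff_isRoot_iterate_derivative hp]
        intro m hm
        have := hl x hx m (by omega)
        rwa [iteratedDeriv_polynomial] at this
      omega
  calc k ≤ ∑ x ∈ s, p.roots.count x := hk.trans (Finset.sum_le_sum hle)
    _ ≤ p.roots.card := by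
      rw [← Multiset.toFinset_sum_count_eq]
      refine Finset.sum_le_sum_of_ne_zero fun x _ hx => ?_
      exact Multiset.mem_toFinset.2 (Multiset.count_ne_zero.1 hx)
    _ ≤ p.natDegree := p.card_roots'

/-! ### Polynomials plus logarithmic terms -/

lemma contDiffOn_pow_mul_log (i : ℕ) :
    ContDiffOn ℝ ∞ (fun x : ℝ => x ^ i * Real.log x) (Ioi 0) :=
  (contDiff_id.pow i).contDiffOn.mul (Real.contDiffOn_log.mono fun x hx => (ne_of_gt hx : x ≠ 0))

/-- For `k > i` the logarithm has disappeared from the `k`-th derivative of `x ^ i * log x`, which is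
then a nonzero multiple of `x ^ (i - k)`. -/
lemma exists_iteratedDeriv_pow_mul_log (i : ℕ) : ∀ k, i < k → ∃ c : ℝ, c ≠ 0 ∧
    ∀ x : ℝ, 0 < x → x ^ k * iteratedDeriv k (fun x => x ^ i * Real.log x) x = c * x ^ i := by
  induction i with
  | zero =>
    intro k hk
    obtain ⟨k, rfl⟩ : ∃ j, k = j + 1 := ⟨k - 1, by omega⟩
    refine ⟨(-1) ^ k * k.factorial, by positivity, fun x hx => ?_⟩
    have : deriv (fun x : ℝ => x ^ 0 * Real.log x) = Inv.inv := by ext y; simp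
    rw [iteratedDeriv_succ', this, iteratedDeriv_eq_iterate, iter_deriv_inv,
      show (-1 - k : ℤ) = -((k + 1 : ℕ) : ℤ) by push_cast; ring, zpow_neg, zpow_natCast]
    field_simp
  | succ i ih =>
    intro k hk
    obtain ⟨k, rfl⟩ : ∃ j, k = j + 1 := ⟨k - 1, by omega⟩
    obtain ⟨c, hc, h⟩ := ih k (by omega)
    refine ⟨(i + 1) * c, by positivity, fun x hx => ?_⟩
    have hd : EqOn (deriv (fun x : ℝ => x ^ (i + 1) * Real.log x))
        ((fun x => ((i : ℝ) + 1) * (x ^ i * Real.log x)) + fun x => x ^ i) (Ioi 0) := by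
      intro y hy
      have hy : y ≠ 0 := ne_of_gt hy
      have := ((hasDerivAt_pow (i + 1) y).mul (Real.hasDerivAt_log hy)).deriv
      refine Eq.trans this ?_
      simp only [Pi.add_apply, Nat.add_sub_cancel]
      push_cast
      field_simp
      ring
    have hpow : iteratedDeriv k (fun x : ℝ => x ^ i) x = 0 := by
      have := congrFun (iteratedDeriv_polynomial (X ^ i) k) x
      rw [iterate_derivative_eq_zero (by simpa using hk)] at this
      simpa using this
    have hmon : ContDiffAt ℝ k (fun x : ℝ => x ^ i) x := contDiffAt_id.pow i
    have hlog : ContDiffAt ℝ k (fun x : ℝ => x ^ i * Real.log x) x :=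
      ((contDiffOn_pow_mul_log i).contDiffAt (Ioi_mem_nhds hx)).of_le (by exact_mod_cast le_top)
    rw [iteratedDeriv_succ', hd.iteratedDeriv_of_isOpen isOpen_Ioi k hx,
      iteratedDeriv_add (contDiffAt_const.mul hlog) hmon, hpow,
      iteratedDeriv_const_mul_field, pow_succ, pow_succ]
    linear_combination ((i : ℝ) + 1) * x * h x hx

/-- A polynomial of degree less than `d` plus `∑ r i * x ^ i * log x` with `i ≤ m < d` has at most
`d + m` zeros in `(0, 1)`, provided some coefficient `r i` is nonzero. -/
lemma HasZeros.le_of_log {P : ℝ[X]} {r : ℕ → ℝ} {d m k : ℕ} (hP : P.natDegree < d) (hm : m < d)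
    (hr : ∃ i ∈ Finset.Icc 1 m, r i ≠ 0)
    (h : HasZeros ((fun x => P.eval x) +
      fun x => ∑ i ∈ Finset.Icc 1 m, r i * (x ^ i * Real.log x)) k) : k ≤ d + m := by
  by_contra! hlt
  choose! c hc0 hc using fun (i : ℕ) (hi : i < d) => exists_iteratedDeriv_pow_mul_log i d hi
  set q : ℝ[X] := ∑ i ∈ Finset.Icc 1 m, C (r i * c i) * X ^ i with hq
  have hqd : q.natDegree ≤ m := natDegree_sum_le_of_forall_le _ _ fun i hi =>
    (natDegree_C_mul_X_pow_le _ _).trans (Finset.mem_Icc.1 hi).2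
  have hq0 : q ≠ 0 := by
    obtain ⟨i, hi, hri⟩ := hr
    intro h0
    have : q.coeff i = r i * c i := by
      rw [hq, finsetSum_coeff, Finset.sum_eq_single_of_mem i hi]
      · rw [coeff_C_mul, coeff_X_pow_self, mul_one]
      · intro j _ hji
        rw [coeff_C_mul, coeff_X_pow, if_neg hji.symm, mul_zero]
    rw [h0, coeff_zero] at this
    exact mul_ne_zero hri (hc0 i (by have := (Finset.mem_Icc.1 hi).2; omega)) this.symm
  have hlog : ∀ i, ContDiffOn ℝ ∞ (fun x : ℝ => r i * (x ^ i * Real.log x)) (Ioo 0 1) := fun i =>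
    contDiffOn_const.mul ((contDiffOn_pow_mul_log i).mono Ioo_subset_Ioi_self)
  have hPs : ContDiff ℝ ∞ (fun x => P.eval x) := contDiff_polynomial P
  have hF : ContDiffOn ℝ ∞ ((fun x => P.eval x) +
      fun x => ∑ i ∈ Finset.Icc 1 m, r i * (x ^ i * Real.log x)) (Ioo 0 1) :=
    hPs.contDiffOn.add (ContDiffOn.sum fun i _ => hlog i)
  obtain ⟨hz, hs⟩ := HasZeros.iteratedDeriv d (h.mono (show m + 1 + d ≤ k by omega)) hF
  have hqz : HasZeros (fun x => q.eval x) (m + 1) := by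
    refine hz.of_mul hs (c := fun x => x ^ d) (contDiff_id.pow d).contDiffOn fun x hx => ?_
    have hI : Ioo (0 : ℝ) 1 ∈ nhds x := isOpen_Ioo.mem_nhds hx
    have hat : ∀ {f : ℝ → ℝ}, ContDiffOn ℝ ∞ f (Ioo 0 1) → ContDiffAt ℝ d f x := fun hf =>
      (hf.contDiffAt hI).of_le (by exact_mod_cast le_top)
    simp only [Pi.mul_apply]
    rw [iteratedDeriv_add (hat hPs.contDiffOn) (hat (ContDiffOn.sum fun i _ => hlog i)),
      iteratedDeriv_polynomial, iterate_derivative_eq_zero hP,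
      iteratedDeriv_fun_sum fun i _ => hat (hlog i), hq, eval_finsetSum]
    simp only [eval_zero, zero_add, Finset.mul_sum]
    refine Finset.sum_congr rfl fun i hi => ?_
    rw [iteratedDeriv_const_mul_field]
    simp only [eval_mul, eval_C, eval_pow, eval_X]
    have := hc i (by have := (Finset.mem_Icc.1 hi).2; omega) x hx.1
    linear_combination -(r i) * this
  have := hqz.le_natDegree hq0
  omega

/-! ### The bound for `M` -/

theorem zero_bound_cases_one_to_three
    (n : ℕ) (hn : 2 ≤ n) (u v r : ℕ → ℝ) (M : ℝ → ℝ)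
    (hM : ∀ h ∈ Set.Ioo (0 : ℝ) 1, M h =
      ∑ i ∈ Finset.range (n + 2), u i * (1 - h) ^ (i + 1)
        + ∑ i ∈ Finset.Icc 1 n, v i * h ^ i * (1 - h)
        + ∑ i ∈ Finset.Icc 1 ((n + 1) / 2), r i * h ^ i * (1 - h) * Real.log h) :
    ZerosLE M (Set.Ioo 0 1) (n + 2 + (n + 1) / 2) := by
  intro s l hs hl
  set m := (n + 1) / 2 with hm
  set P : ℝ[X] := ∑ i ∈ Finset.range (n + 2), C (u i) * (1 - X) ^ i +
    ∑ i ∈ Finset.Icc 1 n, C (v i) * X ^ i with hP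
  have hPd : P.natDegree < n + 2 := by
    refine Nat.lt_succ_of_le (natDegree_add_le_of_degree_le
      (natDegree_sum_le_of_forall_le _ _ fun i hi => ?_)
      (natDegree_sum_le_of_forall_le _ _ fun i hi => ?_))
    · have h1 : (1 - X : ℝ[X]).natDegree ≤ 1 := by compute_degree
      have := natDegree_C_mul_le (u i) ((1 - X : ℝ[X]) ^ i)
      have := natDegree_pow_le_of_le i h1
      have := Finset.mem_range.1 hi
      omega
    · have := natDegree_C_mul_X_pow_le (v i) i
      have := Finset.mem_Icc.1 hi
      omega
  set F : ℝ → ℝ := (fun x => P.eval x) +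
    fun x => ∑ i ∈ Finset.Icc 1 m, r i * (x ^ i * Real.log x) with hF
  have hMF : EqOn M ((fun x => 1 - x) * F) (Ioo 0 1) := by
    intro x hx
    rw [hM x hx]
    simp only [hF, hP, Pi.mul_apply, Pi.add_apply, eval_add, eval_finsetSum, eval_mul, eval_C,
      eval_pow, eval_sub, eval_one, eval_X, mul_add, Finset.mul_sum]
    congr 1
    · congr 1 <;> exact Finset.sum_congr rfl fun i _ => by ring
    · exact Finset.sum_congr rfl fun i _ => by ring
  have hFs : ContDiffOn ℝ ∞ F (Ioo 0 1) :=
    (contDiff_polynomial P).contDiffOn.add (ContDiffOn.sum fun i _ => contDiffOn_const.mul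
      ((contDiffOn_pow_mul_log i).mono Ioo_subset_Ioi_self))
  have hlin : ContDiff ℝ ∞ (fun x : ℝ => 1 - x) := contDiff_const.sub contDiff_id
  have hMs : ContDiffOn ℝ ∞ M (Ioo 0 1) := (hlin.contDiffOn.mul hFs).congr hMF
  have hne : ∀ x ∈ Ioo (0 : ℝ) 1, 1 - x ≠ 0 := fun x hx => (sub_pos.2 hx.2).ne'
  have hMz : HasZeros M (∑ x ∈ s, l x) := ⟨s, l, hs, fun x hx => (hl x hx).2.1, le_rfl⟩
  have hFz : HasZeros F (∑ x ∈ s, l x) := by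
    refine hMz.of_mul hMs (c := fun x => (1 - x)⁻¹) (hlin.contDiffOn.inv hne) fun x hx => ?_
    simp only [Pi.mul_apply]
    rw [hMF hx, Pi.mul_apply, inv_mul_cancel_left₀ (hne x hx)]
  by_cases hr : ∃ i ∈ Finset.Icc 1 m, r i ≠ 0
  · exact hFz.le_of_log hPd (by omega) hr
  · push Not at hr
    have hFP : F = fun x => P.eval x := by
      ext x
      simp only [hF, Pi.add_apply]
      rw [Finset.sum_eq_zero fun i hi => by rw [hr i hi, zero_mul], add_zero]
    by_cases hP0 : P = 0
    · -- `M` vanishes identically on `(0, 1)`, so no point of `s` can have a finite multiplicity.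
      have hs0 : s = ∅ := by
        refine Finset.eq_empty_of_forall_notMem fun x hx => (hl x hx).2.2 ?_
        have hM0 : EqOn M (fun _ => 0) (Ioo 0 1) := fun y hy => by
          rw [hMF hy, hFP, hP0]; simp
        rw [hM0.iteratedDeriv_of_isOpen isOpen_Ioo _ (hs hx)]
        simp
      simp [hs0]
    · rw [hFP] at hFz
      have := hFz.le_natDegree hP0
      omega
end

section
/- For every integer n ≥ 0 there exists a real polynomial P of degree at most n such that for all h > 0, the (n+1)-th derivative of the function h ↦ arctan(√h) equals P(h)/((1+h)^{n+1} · h^{n+1/2}). -/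
/-!
The proof is by induction on `n`. The first derivative is `(1/2) / ((1 + h) √h)`. Differentiating
`P / ((1 + h)^(n+1) h^n √h)` and putting the result over `(1 + h)^(n+2) h^(n+1) √h` gives the
numerator `h (1 + h) P' - (n + 1) h P - (n + 1/2) (1 + h) P`. Its degree is at most `n + 1`,
since `h P'` has degree at most that of `P`.
-/

open Polynomial in
/-- The numerator of the next derivative, when `P` is the numerator of the `(n+1)`-st one. -/
noncomputable def nextNumerator (n : ℕ) (P : ℝ[X]) : ℝ[X] :=
  X * derivative P * (1 + X) - C ((n : ℝ) + 1) * (P * X) - C ((n : ℝ) + 1 / 2) * (P * (1 + X))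

open Polynomial in
lemma natDegree_nextNumerator_le {n : ℕ} {P : ℝ[X]} (hP : P.natDegree ≤ n) :
    (nextNumerator n P).natDegree ≤ n + 1 := by
  have h1 : (X * derivative P).natDegree ≤ n := by
    rw [natDegree_le_iff_coeff_eq_zero]
    intro k hk
    obtain ⟨j, rfl⟩ : ∃ j, k = j + 1 := ⟨k - 1, by lia⟩
    rw [coeff_X_mul, coeff_derivative, coeff_eq_zero_of_natDegree_lt (by lia), zero_mul]
  have hX : (1 + X : ℝ[X]).natDegree ≤ 1 := by compute_degree
  unfold nextNumerator
  refine (natDegree_sub_le _ _).trans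
    (max_le ((natDegree_sub_le _ _).trans (max_le ?_ ?_)) ?_)
  · exact natDegree_mul_le_of_le h1 hX
  · exact (natDegree_C_mul_le _ _).trans (natDegree_mul_le_of_le hP natDegree_X_le)
  · exact (natDegree_C_mul_le _ _).trans (natDegree_mul_le_of_le hP hX)

lemma hasDerivAt_numerator_div (n : ℕ) (P : Polynomial ℝ) {h : ℝ} (hh : 0 < h) :
    HasDerivAt (fun x : ℝ => P.eval x / ((1 + x) ^ (n + 1) * (x ^ n * Real.sqrt x)))
      ((nextNumerator n P).eval h / ((1 + h) ^ (n + 2) * (h ^ (n + 1) * Real.sqrt h))) h := by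
  have hs : 0 < Real.sqrt h := Real.sqrt_pos.2 hh
  have hsq : Real.sqrt h ^ 2 = h := Real.sq_sqrt hh.le
  have d1 : HasDerivAt (fun x : ℝ => (1 + x) ^ (n + 1)) (((n : ℝ) + 1) * (1 + h) ^ n) h := by
    refine (((hasDerivAt_id h).const_add 1).fun_pow (n + 1)).congr_deriv ?_
    simp
  have d2 : HasDerivAt (fun x : ℝ => x ^ n) (n * h ^ n / h) h := by
    refine (hasDerivAt_pow n h).congr_deriv ?_
    cases n with
    | zero => simp
    | succ k => rw [pow_succ]; field_simp; simp
  have d3 := (P.hasDerivAt h).div (d1.mul (d2.mul (Real.hasDerivAt_sqrt hh.ne'))) (by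
    simp only [Pi.mul_apply]; positivity)
  refine d3.congr_deriv ?_
  have h1 : (1 + h) ≠ 0 := by positivity
  simp only [nextNumerator, Pi.mul_apply, Polynomial.eval_sub, Polynomial.eval_mul,
    Polynomial.eval_add, Polynomial.eval_C, Polynomial.eval_X, Polynomial.eval_one]
  generalize Real.sqrt h = s at *
  subst hsq
  field_simp
  ring

theorem iteratedDeriv_arctan_sqrt (n : ℕ) :
    ∃ P : Polynomial ℝ, P.degree ≤ (n : ℕ) ∧
      ∀ h : ℝ, 0 < h →
        iteratedDeriv (n + 1) (fun x : ℝ => Real.arctan (Real.sqrt x)) h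
          = P.eval h / ((1 + h) ^ (n + 1) * (h ^ n * Real.sqrt h)) := by
  induction n with
  | zero =>
    refine ⟨Polynomial.C (1 / 2), Polynomial.degree_C_le, fun h hh => ?_⟩
    have hs : 0 < Real.sqrt h := Real.sqrt_pos.2 hh
    rw [zero_add, iteratedDeriv_one, (Real.hasDerivAt_sqrt hh.ne').arctan.deriv,
      Real.sq_sqrt hh.le, Polynomial.eval_C]
    field_simp
  | succ n ih =>
    obtain ⟨P, hP, hd⟩ := ih
    refine ⟨nextNumerator n P, Polynomial.degree_le_of_natDegree_le
      (natDegree_nextNumerator_le (Polynomial.natDegree_le_of_degree_le hP)), fun h hh => ?_⟩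
    rw [iteratedDeriv_succ, ← (hasDerivAt_numerator_div n P hh).deriv]
    -- The formula holds only for positive arguments, hence the passage to germs at `h`.
    apply Filter.EventuallyEq.deriv_eq
    filter_upwards [lt_mem_nhds hh] with x hx using hd x hx
end

section
/- For every integer n ≥ 2 there exists a real polynomial P of degree at most n−1 such that for all h ∈ (0,1), the n-th derivative of the function h ↦ √(1−h)·arcsin(√h) equals P(h)/((1−h)^{n−1} · h^{n−1/2}) − ((2n−3)!!/2^n) · arcsin(√h)/(1−h)^{n−1/2}. -/
/-!
Write `A h = arcsin √h`, so that `A' = 1 / (2 √h √(1 - h))`. The class of functions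

  `P(h) / ((1 - h)^m h^(m + 1/2)) - c A(h) / (1 - h)^(m + 1/2)`

is mapped by differentiation into the class with `m + 1` in place of `m`, where the polynomial becomes
`X (1 - X) P' + m X P - (m + 1/2) (1 - X) P - (c / 2) X^(m + 1)` and the constant becomes
`(m + 1/2) c` (`hasDerivAt_form`). The new polynomial has degree at most `m + 1` if `P` has degree
at most `m` (`natDegree_stepPoly_le`). The first derivative of `√(1 - h) A(h)` is the member of the class
with `m = 0`, `P = 1/2`, `c = 1/2`, and the recursion for `c` yields the double factorials, so
the theorem follows by induction on `m = n - 1`.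
-/

/-- The polynomial numerator of the derivative of
`P(h) / ((1 - h)^m h^(m + 1/2)) - c arcsin √h / (1 - h)^(m + 1/2)`. -/
noncomputable def stepPoly (m : ℕ) (c : ℝ) (P : Polynomial ℝ) : Polynomial ℝ :=
  Polynomial.X * (1 - Polynomial.X) * P.derivative
    + Polynomial.C (m : ℝ) * Polynomial.X * P
    - Polynomial.C ((m : ℝ) + 1 / 2) * (1 - Polynomial.X) * P
    - Polynomial.C (c / 2) * Polynomial.X ^ (m + 1)

theorem natDegree_stepPoly_le (m : ℕ) (c : ℝ) (P : Polynomial ℝ) (hP : P.natDegree ≤ m) :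
    (stepPoly m c P).natDegree ≤ m + 1 := by
  have h1 : (1 - Polynomial.X : Polynomial ℝ).natDegree ≤ 1 := by compute_degree
  have hX : (Polynomial.X : Polynomial ℝ).natDegree ≤ 1 := Polynomial.natDegree_X_le
  have hD : (Polynomial.X * (1 - Polynomial.X) * P.derivative).natDegree ≤ m + 1 := by
    rcases Nat.eq_zero_or_pos m with rfl | hm
    · rw [Polynomial.derivative_of_natDegree_zero (Nat.le_zero.mp hP)]
      simp
    · have h2 := Polynomial.natDegree_derivative_le P
      have h3 := Polynomial.natDegree_mul_le_of_le
        (Polynomial.natDegree_mul_le_of_le hX h1) h2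
      omega
  have hB : (Polynomial.C (m : ℝ) * Polynomial.X * P).natDegree ≤ m + 1 := by
    have := Polynomial.natDegree_mul_le_of_le
      ((Polynomial.natDegree_C_mul_le (m : ℝ) Polynomial.X).trans hX) hP
    omega
  have hC : (Polynomial.C ((m : ℝ) + 1 / 2) * (1 - Polynomial.X) * P).natDegree ≤ m + 1 := by
    have := Polynomial.natDegree_mul_le_of_le
      ((Polynomial.natDegree_C_mul_le ((m : ℝ) + 1 / 2) (1 - Polynomial.X)).trans h1) hP
    omega
  have hE : (Polynomial.C (c / 2) * Polynomial.X ^ (m + 1)).natDegree ≤ m + 1 :=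
    Polynomial.natDegree_C_mul_X_pow_le _ _
  exact Polynomial.natDegree_sub_le_of_le
    (Polynomial.natDegree_sub_le_of_le (Polynomial.natDegree_add_le_of_degree_le hD hB) hC)
    hE |>.trans (by simp)

theorem hasDerivAt_sqrt_one_sub {h : ℝ} (h1 : h < 1) :
    HasDerivAt (fun x : ℝ => Real.sqrt (1 - x)) (-1 / (2 * Real.sqrt (1 - h))) h :=
  ((hasDerivAt_id h).const_sub 1).sqrt (sub_pos.mpr h1).ne'

theorem hasDerivAt_arcsin_sqrt {h : ℝ} (h0 : 0 < h) (h1 : h < 1) :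
    HasDerivAt (fun x : ℝ => Real.arcsin (Real.sqrt x))
      (1 / (2 * Real.sqrt h * Real.sqrt (1 - h))) h := by
  have hs : 0 < Real.sqrt h := Real.sqrt_pos.mpr h0
  have hs1 : Real.sqrt h < 1 := by
    rw [Real.sqrt_lt' one_pos]
    simpa using h1
  have := (Real.hasDerivAt_arcsin (by linarith) hs1.ne).comp h (Real.hasDerivAt_sqrt h0.ne')
  rw [Real.sq_sqrt h0.le] at this
  refine this.congr_deriv ?_
  field_simp

/-- The power rule with the exponent `m - 1` avoided by division. -/
theorem hasDerivAt_pow_div {f : ℝ → ℝ} {f' h : ℝ} (m : ℕ) (hf : HasDerivAt f f' h)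
    (h0 : f h ≠ 0) :
    HasDerivAt (fun x => f x ^ m) (m * f h ^ m / f h * f') h := by
  refine (hf.fun_pow m).congr_deriv ?_
  rcases m with _ | m
  · simp
  · simp only [Nat.add_sub_cancel, pow_succ]
    field_simp

theorem hasDerivAt_form (m : ℕ) (c : ℝ) (P : Polynomial ℝ) {h : ℝ} (h0 : 0 < h) (h1 : h < 1) :
    HasDerivAt
      (fun x : ℝ => P.eval x / ((1 - x) ^ m * (x ^ m * Real.sqrt x))
        - c * Real.arcsin (Real.sqrt x) / ((1 - x) ^ m * Real.sqrt (1 - x)))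
      ((stepPoly m c P).eval h / ((1 - h) ^ (m + 1) * (h ^ (m + 1) * Real.sqrt h))
        - (c * ((m : ℝ) + 1 / 2)) * Real.arcsin (Real.sqrt h)
          / ((1 - h) ^ (m + 1) * Real.sqrt (1 - h))) h := by
  have ht0 : 0 < 1 - h := sub_pos.mpr h1
  have hs : 0 < Real.sqrt h := Real.sqrt_pos.mpr h0
  have ht : 0 < Real.sqrt (1 - h) := Real.sqrt_pos.mpr ht0
  have es : Real.sqrt h ^ 2 = h := Real.sq_sqrt h0.le
  have et : Real.sqrt (1 - h) ^ 2 = 1 - h := Real.sq_sqrt ht0.le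
  have dp := hasDerivAt_pow_div m (hasDerivAt_id h) h0.ne'
  have dq := hasDerivAt_pow_div m ((hasDerivAt_id h).const_sub 1) ht0.ne'
  have d1 := (P.hasDerivAt h).div (dq.mul (dp.mul (Real.hasDerivAt_sqrt h0.ne')))
    (mul_pos (pow_pos ht0 m) (mul_pos (pow_pos h0 m) hs)).ne'
  have d2 := ((hasDerivAt_arcsin_sqrt h0 h1).const_mul c).div
    (dq.mul (hasDerivAt_sqrt_one_sub h1)) (mul_pos (pow_pos ht0 m) ht).ne'
  refine (d1.sub d2).congr_deriv ?_
  simp only [stepPoly, Polynomial.eval_sub, Polynomial.eval_add, Polynomial.eval_mul,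
    Polynomial.eval_X, Polynomial.eval_C, Polynomial.eval_one, Polynomial.eval_pow, id,
    Pi.mul_apply]
  clear d1 d2 dp dq
  generalize Real.arcsin (Real.sqrt h) = A
  generalize Polynomial.eval h P = p
  generalize Polynomial.eval h (Polynomial.derivative P) = p'
  generalize Real.sqrt h = s at *
  generalize Real.sqrt (1 - h) = t at *
  have hh : h ≠ 0 := h0.ne'
  generalize 1 - h = u at *
  have hu0 : u ≠ 0 := ht0.ne'
  have e1 : (p' * (u ^ m * (h ^ m * s)) - p * (m * u ^ m / u * -1 * (h ^ m * s)
        + u ^ m * (m * h ^ m / h * 1 * s + h ^ m * (1 / (2 * s)))))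
        / (u ^ m * (h ^ m * s)) ^ 2
      = (h * u * p' + m * h * p - (m + 1 / 2) * u * p) / (u ^ (m + 1) * (h ^ (m + 1) * s)) := by
    rw [← es]
    field_simp
    ring
  have e2 : (c * (1 / (2 * s * t)) * (u ^ m * t) - c * A * (m * u ^ m / u * -1 * t
        + u ^ m * (-1 / (2 * t)))) / (u ^ m * t) ^ 2
      = c / 2 * h ^ (m + 1) / (u ^ (m + 1) * (h ^ (m + 1) * s))
        + c * (m + 1 / 2) * A / (u ^ (m + 1) * t) := by
    rw [← et]
    field_simp
    ring
  rw [e1, e2]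
  ring

theorem exists_form (m : ℕ) :
    ∃ P : Polynomial ℝ, P.natDegree ≤ m ∧
      ∀ h ∈ Set.Ioo (0 : ℝ) 1,
        iteratedDeriv (m + 1) (fun x : ℝ => Real.sqrt (1 - x) * Real.arcsin (Real.sqrt x)) h
          = P.eval h / ((1 - h) ^ m * (h ^ m * Real.sqrt h))
            - ((Nat.doubleFactorial (2 * m - 1) : ℝ) / 2 ^ (m + 1)) *
              Real.arcsin (Real.sqrt h) / ((1 - h) ^ m * Real.sqrt (1 - h)) := by
  induction m with
  | zero =>
    refine ⟨Polynomial.C (1 / 2), by simp, fun h hh => ?_⟩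
    have hs : 0 < Real.sqrt h := Real.sqrt_pos.mpr hh.1
    have ht : 0 < Real.sqrt (1 - h) := Real.sqrt_pos.mpr (sub_pos.mpr hh.2)
    rw [zero_add, iteratedDeriv_one,
      ((hasDerivAt_sqrt_one_sub hh.2).fun_mul (hasDerivAt_arcsin_sqrt hh.1 hh.2)).deriv]
    simp
    field_simp
    ring
  | succ m ih =>
    obtain ⟨P, hP, hd⟩ := ih
    refine ⟨stepPoly m (Nat.doubleFactorial (2 * m - 1) / 2 ^ (m + 1)) P,
      natDegree_stepPoly_le m _ P hP, fun h hh => ?_⟩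
    rw [iteratedDeriv_succ, (Filter.eventuallyEq_of_mem (isOpen_Ioo.mem_nhds hh) hd).deriv_eq,
      (hasDerivAt_form m _ P hh.1 hh.2).deriv]
    -- At `m = 0` the truncated `2 * m - 1 = 0` still gives the conventional value `(-1)!! = 1`.
    have hc : (Nat.doubleFactorial (2 * (m + 1) - 1) : ℝ)
        = (2 * m + 1) * Nat.doubleFactorial (2 * m - 1) := by
      rcases m with _ | m
      · simp
      · have : 2 * (m + 1 + 1) - 1 = (2 * (m + 1) - 1) + 2 := by omega
        rw [this, Nat.doubleFactorial_add_two]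
        have : 2 * (m + 1) - 1 + 2 = 2 * (m + 1) + 1 := by omega
        rw [this]
        push_cast
        ring
    rw [hc]
    congr 3
    field_simp
    ring


theorem iteratedDeriv_sqrt_mul_arcsin_sqrt (n : ℕ) (hn : 2 ≤ n) :
    ∃ P : Polynomial ℝ, P.degree ≤ (n - 1 : ℕ) ∧
      ∀ h ∈ Set.Ioo (0 : ℝ) 1,
        iteratedDeriv n (fun x : ℝ => Real.sqrt (1 - x) * Real.arcsin (Real.sqrt x)) h
          = P.eval h / ((1 - h) ^ (n - 1) * (h ^ (n - 1) * Real.sqrt h))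
            - ((Nat.doubleFactorial (2 * n - 3) : ℝ) / 2 ^ n) *
              Real.arcsin (Real.sqrt h) / ((1 - h) ^ (n - 1) * Real.sqrt (1 - h)) := by
  obtain ⟨m, rfl⟩ : ∃ m, n = m + 1 := ⟨n - 1, by omega⟩
  obtain ⟨P, hP, hd⟩ := exists_form m
  refine ⟨P, Polynomial.degree_le_of_natDegree_le hP, fun h hh => ?_⟩
  have e : 2 * (m + 1) - 3 = 2 * m - 1 := by omega
  rw [e]
  exact hd h hh
end

section
/- (Zero bound in the proof of Theorem 4.2, n ≥ 3.) Let n ≥ 3 be an integer and set m = n + ⌊(n−1)/2⌋. Let M : (0,1) → ℝ be of the form M(h) = (h−1)^{−(n−2)}·[Q_0(h) + Q_1(h)√h + Q_2(h)√(1−h) + Q_3(h)·√(1−h)·arcsin(√h) + Q_4(h)·ln((1+√h)/(1−√h)) + Q_5(h)·ln(1−h)], where Q_0, ..., Q_5 are real polynomials with deg Q_0 ≤ m−1, deg Q_1 ≤ n−2+⌊n/2⌋, and deg Q_2, deg Q_3, deg Q_4, deg Q_5 ≤ n−1. Then M has at most 15n − 11 zeros on (0,1) counting multiplicity. -/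
namespace ZeroBound

open Polynomial Set

/-! ### Zeros with multiplicity and Rolle's theorem -/

/-- `f` has at most `N` zeros on `(0,1)` counted with multiplicity, or vanishes identically there.
Multiplicities enter as lower bounds for the vanishing order, so that a family `l` of lower bounds
sums to at most `N`. Allowing `f = 0` makes the notion stable under passing from `f'` to `f`. -/
def ZCount (f : ℝ → ℝ) (N : ℕ) : Prop :=
  (∀ x ∈ Ioo (0 : ℝ) 1, f x = 0) ∨
    ∀ (s : Finset ℝ) (l : ℝ → ℕ), (↑s : Set ℝ) ⊆ Ioo 0 1 →
      (∀ x ∈ s, (l x : ℕ∞) ≤ analyticOrderAt f x) → ∑ x ∈ s, l x ≤ N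

theorem ZCount.mono {f : ℝ → ℝ} {N N' : ℕ} (h : ZCount f N) (hN : N ≤ N') : ZCount f N' :=
  h.imp id fun h s l hs hl => (h s l hs hl).trans hN

theorem ZCount.of_deriv_eq_zero {f : ℝ → ℝ} (hf : AnalyticOnNhd ℝ f (Ioo 0 1))
    (h : ∀ x ∈ Ioo (0 : ℝ) 1, deriv f x = 0) : ZCount f 0 := by
  by_cases h0 : ∃ x ∈ Ioo (0 : ℝ) 1, f x = 0
  · left
    obtain ⟨x, hx, hfx⟩ := h0
    intro y hy
    rw [← hfx]
    exact isOpen_Ioo.is_const_of_deriv_eq_zero isPreconnected_Ioo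
      hf.differentiableOn (fun z hz => h z hz) hy hx
  · right
    push Not at h0
    intro s l hs hl
    refine (Finset.sum_eq_zero fun x hx => ?_).le
    by_contra hlx
    refine h0 x (hs hx) (apply_eq_zero_of_analyticOrderAt_ne_zero fun h' => hlx ?_)
    have := hl x hx
    rw [h'] at this
    exact_mod_cast le_antisymm this zero_le

/-- Rolle's theorem with multiplicities: passing from `f` to `f'` loses at most one zero. -/
theorem ZCount.of_deriv {f : ℝ → ℝ} {N : ℕ} (hf : AnalyticOnNhd ℝ f (Ioo 0 1))
    (h : ZCount (deriv f) N) : ZCount f (N + 1) := by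
  classical
  rcases h with h | h
  · exact (ZCount.of_deriv_eq_zero hf h).mono (Nat.zero_le _)
  right
  intro s₀ l hs₀ hl₀
  -- Points carrying multiplicity `0` are discarded; they need not be zeros of `f`.
  set s := s₀.filter (fun x => l x ≠ 0) with hsdef
  have hsum : ∑ x ∈ s₀, l x = ∑ x ∈ s, l x := by
    rw [hsdef, Finset.sum_filter_ne_zero]
  have hs : ∀ x ∈ s, x ∈ Ioo (0 : ℝ) 1 := fun x hx => hs₀ (Finset.mem_filter.1 hx).1
  have hpos : ∀ x ∈ s, 1 ≤ l x := fun x hx =>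
    Nat.one_le_iff_ne_zero.2 (Finset.mem_filter.1 hx).2
  have hl : ∀ x ∈ s, (l x : ℕ∞) ≤ analyticOrderAt f x := fun x hx =>
    hl₀ x (Finset.mem_filter.1 hx).1
  have hz : ∀ x ∈ s, f x = 0 := by
    intro x hx
    refine apply_eq_zero_of_analyticOrderAt_ne_zero fun h' => ?_
    have h1 := hl x hx
    have h2 := hpos x hx
    rw [h'] at h1
    have : l x = 0 := by exact_mod_cast le_antisymm h1 zero_le
    omega
  have rolle : ∀ p : ℝ × ℝ, ∃ c, p.1 ∈ s → p.2 ∈ s → p.1 < p.2 →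
      c ∈ Ioo p.1 p.2 ∧ deriv f c = 0 := by
    rintro ⟨x, y⟩
    by_cases hxy : x ∈ s ∧ y ∈ s ∧ x < y
    · obtain ⟨hx, hy, hlt⟩ := hxy
      obtain ⟨c, hc, hc'⟩ := exists_deriv_eq_zero (f := f) hlt
        (hf.continuousOn.mono fun z hz' =>
          ⟨(hs x hx).1.trans_le hz'.1, hz'.2.trans_lt (hs y hy).2⟩)
        ((hz x hx).trans (hz y hy).symm)
      exact ⟨c, fun _ _ _ => ⟨hc, hc'⟩⟩
    · exact ⟨0, fun h1 h2 h3 => absurd ⟨h1, h2, h3⟩ hxy⟩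
  choose c hc using rolle
  set t := ((s ×ˢ s).filter (fun p => p.1 < p.2)).image c with ht
  have htmem : ∀ z ∈ t, z ∈ Ioo (0 : ℝ) 1 ∧ deriv f z = 0 := by
    intro z hz'
    obtain ⟨p, hp, rfl⟩ := Finset.mem_image.1 hz'
    rw [Finset.mem_filter, Finset.mem_product] at hp
    obtain ⟨h1, h2⟩ := hc p hp.1.1 hp.1.2 hp.2
    exact ⟨⟨(hs _ hp.1.1).1.trans h1.1, h1.2.trans (hs _ hp.1.2).2⟩, h2⟩
  have hcard : s.card ≤ (t \ s).card + 1 := by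
    apply Finset.card_le_sdiff_of_interleaved
    intro x hx y hy hxy _
    have hm := hc (x, y) hx hy hxy
    refine ⟨c (x, y), Finset.mem_image.2 ⟨(x, y), ?_, rfl⟩, hm.1.1, hm.1.2⟩
    simp [hx, hy, hxy]
  -- Each zero survives in `f'` with multiplicity one less, and the Rolle points outside `s` are new.
  have key := h (s ∪ (t \ s)) (fun x => if x ∈ s then l x - 1 else 1) ?_ ?_
  · rw [Finset.sum_union Finset.disjoint_sdiff,
      Finset.sum_congr rfl (g := fun x => l x - 1) (fun x hx => by simp [hx]),
      Finset.sum_congr (s₁ := t \ s) rfl (g := fun _ => 1)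
        (fun x hx => by simp [(Finset.mem_sdiff.1 hx).2])] at key
    have h1 : ∑ x ∈ s, l x = ∑ x ∈ s, (l x - 1) + s.card := by
      rw [Finset.card_eq_sum_ones, ← Finset.sum_add_distrib]
      exact Finset.sum_congr rfl fun x hx => (Nat.sub_add_cancel (hpos x hx)).symm
    rw [← Finset.card_eq_sum_ones] at key
    omega
  · intro x hx
    rcases Finset.mem_union.1 (Finset.mem_coe.1 hx) with hx | hx
    · exact hs x hx
    · exact (htmem x (Finset.mem_sdiff.1 hx).1).1
  · intro x hx
    rcases Finset.mem_union.1 hx with hx | hx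
    · simp only [hx, if_true]
      have h1 := (natCast_le_analyticOrderAt_iff_iteratedDeriv_eq_zero (hf x (hs x hx))).1 (hl x hx)
      rw [natCast_le_analyticOrderAt_iff_iteratedDeriv_eq_zero (hf x (hs x hx)).deriv]
      intro i hi
      rw [← iteratedDeriv_succ']
      exact h1 _ (by omega)
    · have hx' := Finset.mem_sdiff.1 hx
      simp only [hx'.2, if_false, Nat.cast_one]
      rw [Order.one_le_iff_ne_zero, analyticOrderAt_ne_zero]
      exact ⟨(hf x (htmem x hx'.1).1).deriv, (htmem x hx'.1).2⟩

/-- A nonvanishing analytic factor may be inserted before counting zeros; this is how a function at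
the end of one stage is brought into the initial shape of the next. -/
theorem ZCount.of_mul {f g : ℝ → ℝ} {N : ℕ} (hf : AnalyticOnNhd ℝ f (Ioo 0 1))
    (hg : AnalyticOnNhd ℝ g (Ioo 0 1)) (hg0 : ∀ x ∈ Ioo (0 : ℝ) 1, g x ≠ 0)
    (h : ZCount (g * f) N) : ZCount f N := by
  rcases h with h | h
  · exact Or.inl fun x hx => (mul_eq_zero.1 (h x hx)).resolve_left (hg0 x hx)
  · refine Or.inr fun s l hs hl => h s l hs fun x hx => ?_
    rw [analyticOrderAt_mul (hg x (hs hx)) (hf x (hs hx))]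
    exact (hl x hx).trans le_add_self

/-- Iterated Rolle. A family of predicates `P i` such that differentiation maps `P i` into `P (i + 1)`
costs one zero per step. -/
theorem ZCount.chain {P : ℕ → (ℝ → ℝ) → Prop} {N : ℕ} (k : ℕ)
    (hstep : ∀ i f, P i f → P (i + 1) (deriv f))
    (hend : ∀ f, AnalyticOnNhd ℝ f (Ioo 0 1) → P k f → ZCount f N)
    {f : ℝ → ℝ} (hf : AnalyticOnNhd ℝ f (Ioo 0 1)) (h0 : P 0 f) : ZCount f (N + k) := by
  induction k generalizing P f with
  | zero => exact hend f hf h0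
  | succ k ih =>
    exact ZCount.of_deriv hf (ih (P := fun i => P (i + 1)) (fun i f h => hstep _ f h)
      hend hf.deriv (hstep 0 f h0))

/-- `ZCount` implies the bound in `ZerosLE`. In the case `f = 0` on `(0,1)` no point has finite
multiplicity, so the family of zeros is empty. -/
theorem ZCount.zerosLE_aux {f : ℝ → ℝ} {N : ℕ} (hf : AnalyticOnNhd ℝ f (Ioo 0 1))
    (h : ZCount f N) (s : Finset ℝ) (l : ℝ → ℕ)
    (hs : (↑s : Set ℝ) ⊆ Ioo 0 1)
    (hl : ∀ x ∈ s, 1 ≤ l x ∧ (∀ j < l x, iteratedDeriv j f x = 0) ∧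
      iteratedDeriv (l x) f x ≠ 0) : ∑ x ∈ s, l x ≤ N := by
  rcases h with h | h
  · have : s = ∅ := by
      refine Finset.eq_empty_of_forall_notMem fun x hx => (hl x hx).2.2 ?_
      have : f =ᶠ[nhds x] fun _ => 0 :=
        Filter.eventually_of_mem (isOpen_Ioo.mem_nhds (hs hx)) h
      rw [this.iteratedDeriv_eq]
      simp
    simp [this]
  · exact h s l hs fun x hx =>
      (natCast_le_analyticOrderAt_iff_iteratedDeriv_eq_zero (hf x (hs hx))).2 (hl x hx).2.1

/-! ### Degree bounds -/

/-- Degree bound for a product, in which `q` has degree below the truncated difference `n - k`. The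
hypothesis `e + n ≤ D + k` suffices even for `n < k`, because then `q = 0`. -/
theorem mem_mul {p q : ℝ[X]} {e n k D : ℕ} (hp : p.natDegree ≤ e)
    (hq : q ∈ degreeLT ℝ (n - k)) (hD : e + n ≤ D + k) : p * q ∈ degreeLT ℝ D := by
  by_cases h : q = 0
  · simp [h]
  rw [mem_degreeLT] at hq ⊢
  by_cases h' : p = 0
  · simp [h']
  rw [← natDegree_lt_iff_degree_lt h] at hq
  rw [← natDegree_lt_iff_degree_lt (mul_ne_zero h' h)]
  have := natDegree_mul_le (p := p) (q := q)
  omega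

theorem mem_mul_zero {p q : ℝ[X]} {e n D : ℕ} (hp : p.natDegree ≤ e)
    (hq : q ∈ degreeLT ℝ n) (hD : e + n ≤ D) : p * q ∈ degreeLT ℝ D :=
  mem_mul (k := 0) hp hq hD

theorem mem_derivative {q : ℝ[X]} {d : ℕ} (hq : q ∈ degreeLT ℝ d) :
    derivative q ∈ degreeLT ℝ (d - 1) := by
  rw [mem_degreeLT, degree_lt_iff_coeff_zero] at hq ⊢
  intro j hj
  rw [coeff_derivative, hq (j + 1) (by omega), zero_mul]

theorem eq_zero_of_mem {q : ℝ[X]} {d k : ℕ} (h : d ≤ k) (hq : q ∈ degreeLT ℝ (d - k)) :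
    q = 0 := by
  rw [Nat.sub_eq_zero_of_le h, mem_degreeLT, degree_lt_iff_coeff_zero] at hq
  ext j
  simpa using hq j (Nat.zero_le j)


/-! ### Derivatives of the elementary functions -/

theorem hasDerivAt_U {x : ℝ} (hx : x ∈ Ioo (0 : ℝ) 1) (k : ℕ) :
    HasDerivAt (fun x => √x / x ^ k) ((1 / 2 - k) * (√x / x ^ (k + 1))) x := by
  have h0 : 0 < x := hx.1
  have hs : 0 < √x := Real.sqrt_pos.2 h0
  have h := (Real.hasDerivAt_sqrt h0.ne').fun_div (hasDerivAt_pow k x) (pow_pos h0 k).ne'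
  refine h.congr_deriv ?_
  obtain ⟨s, hs0, rfl⟩ : ∃ s : ℝ, 0 < s ∧ x = s ^ 2 := ⟨√x, hs, (Real.sq_sqrt h0.le).symm⟩
  rw [Real.sqrt_sq hs0.le]
  rcases k with _ | k
  · simp; field_simp
  · rw [Nat.add_sub_cancel]
    field_simp
    push_cast
    ring

theorem hasDerivAt_one_sub (x : ℝ) : HasDerivAt (fun x : ℝ => 1 - x) (-1) x := by
  simpa using (hasDerivAt_id x).const_sub 1

theorem one_sub_mem {x : ℝ} (hx : x ∈ Ioo (0 : ℝ) 1) : 1 - x ∈ Ioo (0 : ℝ) 1 :=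
  ⟨by linarith [hx.2], by linarith [hx.1]⟩

theorem hasDerivAt_C {x : ℝ} (hx : x ∈ Ioo (0 : ℝ) 1) (k : ℕ) :
    HasDerivAt (fun x => √(1 - x) / (1 - x) ^ k)
      ((k - 1 / 2) * (√(1 - x) / (1 - x) ^ (k + 1))) x := by
  have h := HasDerivAt.comp (h := fun x : ℝ => 1 - x) x
    (hasDerivAt_U (one_sub_mem hx) k) (hasDerivAt_one_sub x)
  refine (h.congr_deriv ?_)
  ring

theorem hasDerivAt_V {x : ℝ} (hx : x ∈ Ioo (0 : ℝ) 1) (k : ℕ) :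
    HasDerivAt (fun x : ℝ => 1 / (1 - x) ^ k) (k / (1 - x) ^ (k + 1)) x := by
  have h0 := (one_sub_mem hx).1
  have h := (hasDerivAt_const x (1 : ℝ)).fun_div ((hasDerivAt_one_sub x).fun_pow k) (pow_pos h0 k).ne'
  refine (h.congr_deriv ?_)
  rcases k with _ | k
  · simp
  · rw [Nat.add_sub_cancel]
    field_simp
    ring

/-- The derivative is written with a numerator `√x √(1-x)`, so that multiplying it by the powers
of `x` and `1 - x` that occur only produces polynomial factors. -/
theorem hasDerivAt_asin {x : ℝ} (hx : x ∈ Ioo (0 : ℝ) 1) :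
    HasDerivAt (fun x => Real.arcsin √x) (√x * √(1 - x) / (2 * x * (1 - x))) x := by
  have h0 : 0 < x := hx.1
  have h1 := (one_sub_mem hx).1
  have hs : 0 < √x := Real.sqrt_pos.2 h0
  have hc : 0 < √(1 - x) := Real.sqrt_pos.2 h1
  have hs1 : √x < 1 := by rw [Real.sqrt_lt' one_pos]; simpa using hx.2
  have h := HasDerivAt.comp (h := fun x : ℝ => √x) x
    (Real.hasDerivAt_arcsin (x := √x) (by linarith) hs1.ne) (Real.hasDerivAt_sqrt h0.ne')
  refine (h.congr_deriv ?_)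
  rw [Real.sq_sqrt h0.le]
  have e1 := Real.sq_sqrt h0.le
  have e2 := Real.sq_sqrt h1.le
  field_simp
  rw [e1, e2, mul_comm]

theorem hasDerivAt_L1 {x : ℝ} (hx : x ∈ Ioo (0 : ℝ) 1) :
    HasDerivAt (fun x => Real.log ((1 + √x) / (1 - √x))) (√x / (x * (1 - x))) x := by
  have h0 : 0 < x := hx.1
  have h1 := (one_sub_mem hx).1
  have hs : 0 < √x := Real.sqrt_pos.2 h0
  have hs1 : √x < 1 := by rw [Real.sqrt_lt' one_pos]; simpa using hx.2
  have hs2 : 0 < 1 - √x := by linarith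
  have hd := Real.hasDerivAt_sqrt h0.ne'
  have h := ((hd.const_add 1).fun_div (hd.const_sub 1) hs2.ne').log (by positivity)
  refine (h.congr_deriv ?_)
  obtain ⟨s, hs0, rfl⟩ : ∃ s : ℝ, 0 < s ∧ x = s ^ 2 := ⟨√x, hs, (Real.sq_sqrt h0.le).symm⟩
  rw [Real.sqrt_sq hs0.le] at *
  have : 1 - s ^ 2 = (1 - s) * (1 + s) := by ring
  rw [this]
  field_simp
  ring

theorem hasDerivAt_L2 {x : ℝ} (hx : x ∈ Ioo (0 : ℝ) 1) :
    HasDerivAt (fun x : ℝ => Real.log (1 - x)) (-1 / (1 - x)) x :=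
  (hasDerivAt_one_sub x).log (one_sub_mem hx).1.ne'

theorem deriv_eq_of_eqOn {f F : ℝ → ℝ} {F' x : ℝ} (h : ∀ x ∈ Ioo (0 : ℝ) 1, f x = F x)
    (hx : x ∈ Ioo (0 : ℝ) 1) (hF : HasDerivAt F F' x) : deriv f x = F' := by
  have : f =ᶠ[nhds x] F := Filter.eventually_of_mem (isOpen_Ioo.mem_nhds hx) h
  rw [this.deriv_eq, hF.deriv]

/-! ### The four families of functions -/

/-- Shape of the `k`-th derivative of `Q₀ + Q₁ √x + Q₂ √(1-x) + Q₃ √(1-x) arcsin √x + Q₄ L₁ + Q₅ L₂`,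
with `L₁ = log ((1+√x)/(1-√x))` and `L₂ = log (1-x)`. The polynomial and logarithmic coefficients
lose a degree at each step and disappear at `k = m ≥ n`; the coefficients attached to powers of
`1 - x` alone keep their degree, and only `w` grows. -/
def StageA (m n D k : ℕ) (f : ℝ → ℝ) : Prop :=
  ∃ q0 ∈ degreeLT ℝ (m - k), ∃ q4 ∈ degreeLT ℝ (n - k), ∃ q5 ∈ degreeLT ℝ (n - k),
  ∃ r0 ∈ degreeLT ℝ n, ∃ r2 ∈ degreeLT ℝ n, ∃ r3 ∈ degreeLT ℝ n, ∃ w ∈ degreeLT ℝ (D + k),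
  ∀ x ∈ Ioo (0 : ℝ) 1, f x = eval x q0 + eval x q4 * Real.log ((1 + √x) / (1 - √x))
    + eval x q5 * Real.log (1 - x) + eval x r0 * (1 / (1 - x) ^ k)
    + √(1 - x) / (1 - x) ^ k * (eval x r2 + eval x r3 * Real.arcsin √x)
    + √x / x ^ k * (1 / (1 - x) ^ k) * eval x w

theorem nd_oneSub : (1 - X : ℝ[X]).natDegree ≤ 1 := by compute_degree

theorem nd_oneSub_pow (k : ℕ) : ((1 - X : ℝ[X]) ^ k).natDegree ≤ k := by compute_degree

theorem StageA.step {m n D k : ℕ} (hD : n ≤ D) {f : ℝ → ℝ} (hf : StageA m n D k f) :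
    StageA m n D (k + 1) (deriv f) := by
  obtain ⟨q0, hq0, q4, hq4, q5, hq5, r0, hr0, r2, hr2, r3, hr3, w, hw, hf⟩ := hf
  have lin : ∀ r ∈ degreeLT ℝ n, ∀ c : ℝ, C c * r + (1 - X) * derivative r ∈ degreeLT ℝ n := by
    intro r hr c
    refine Submodule.add_mem _ (mem_mul_zero (e := 0) (natDegree_C _).le hr (by omega)) ?_
    exact mem_mul nd_oneSub (mem_derivative hr) (by omega)
  refine ⟨derivative q0, mem_derivative hq0, derivative q4, mem_derivative hq4,
    derivative q5, mem_derivative hq5,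
    (C (k : ℝ) * r0 + (1 - X) * derivative r0) - (1 - X) ^ k * q5, ?_,
    C (k - 1 / 2 : ℝ) * r2 + (1 - X) * derivative r2, lin _ hr2 _,
    C (k - 1 / 2 : ℝ) * r3 + (1 - X) * derivative r3, lin _ hr3 _,
    (C (1 / 2 - k : ℝ) * (1 - X)) * w + (C (k : ℝ) * X) * w + (X * (1 - X)) * derivative w
      + (X ^ k * (1 - X) ^ k) * q4 + (C (1 / 2 : ℝ) * X ^ k * (1 - X)) * r3, ?_, ?_⟩
  · exact Submodule.sub_mem _ (lin _ hr0 _) (mem_mul (nd_oneSub_pow k) hq5 (by omega))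
  · refine Submodule.add_mem _ (Submodule.add_mem _ (Submodule.add_mem _ (Submodule.add_mem _
      (mem_mul_zero (e := 1) ?_ hw (by omega)) (mem_mul_zero (e := 1) ?_ hw (by omega)))
      (mem_mul (e := 2) ?_ (mem_derivative hw) (by omega)))
      (mem_mul (e := k + k) ?_ hq4 (by omega))) (mem_mul_zero (e := k + 1) ?_ hr3 (by omega))
    all_goals compute_degree
  · intro x hx
    have h0 : 0 < x := hx.1
    have h1 := (one_sub_mem hx).1
    have hd := ((((q0.hasDerivAt x).fun_add ((q4.hasDerivAt x).fun_mul (hasDerivAt_L1 hx))).fun_add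
      ((q5.hasDerivAt x).fun_mul (hasDerivAt_L2 hx))).fun_add
      ((r0.hasDerivAt x).fun_mul (hasDerivAt_V hx k))).fun_add
      ((hasDerivAt_C hx k).fun_mul
        ((r2.hasDerivAt x).fun_add ((r3.hasDerivAt x).fun_mul (hasDerivAt_asin hx))))
    have hd := hd.fun_add (((hasDerivAt_U hx k).fun_mul (hasDerivAt_V hx k)).fun_mul (w.hasDerivAt x))
    rw [deriv_eq_of_eqOn hf hx hd]
    have e2 := Real.sq_sqrt h1.le
    clear hd
    simp only [eval_add, eval_sub, eval_mul, eval_C, eval_X, eval_pow, eval_one]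
    generalize √(1 - x) = c at e2 ⊢
    generalize 1 - x = y at e2 h1 ⊢
    subst e2
    have hc : c ≠ 0 := by rintro rfl; simp at h1
    field_simp
    ring

/-- Shape of the `k`-th derivative of what remains of stage A after multiplication by
`(1-x)^m / √(1-x)`: at `k = n` the polynomial and the arcsine are gone. -/
def StageB (m n E k : ℕ) (f : ℝ → ℝ) : Prop :=
  ∃ q2 ∈ degreeLT ℝ (n - k), ∃ q3 ∈ degreeLT ℝ (n - k), ∃ r0 ∈ degreeLT ℝ n,
  ∃ w ∈ degreeLT ℝ (E + k),
  ∀ x ∈ Ioo (0 : ℝ) 1, f x = eval x q2 + eval x q3 * Real.arcsin √x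
    + √(1 - x) / (1 - x) ^ (k + 1) * eval x r0
    + √x / x ^ (m + k) * (√(1 - x) / (1 - x) ^ (k + 1)) * eval x w

theorem StageB.step {m n E k : ℕ} (hE : m + n ≤ E) {f : ℝ → ℝ} (hf : StageB m n E k f) :
    StageB m n E (k + 1) (deriv f) := by
  obtain ⟨q2, hq2, q3, hq3, r0, hr0, w, hw, hf⟩ := hf
  refine ⟨derivative q2, mem_derivative hq2, derivative q3, mem_derivative hq3,
    C ((k + 1 : ℕ) - 1 / 2 : ℝ) * r0 + (1 - X) * derivative r0, ?_,
    (C (1 / 2 - (m + k : ℕ) : ℝ) * (1 - X)) * w + (C ((k + 1 : ℕ) - 1 / 2 : ℝ) * X) * w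
      + (X * (1 - X)) * derivative w
      + (C (1 / 2 : ℝ) * X ^ (m + k) * (1 - X) ^ (k + 1)) * q3, ?_, ?_⟩
  · refine Submodule.add_mem _ (mem_mul_zero (e := 0) (natDegree_C _).le hr0 (by omega)) ?_
    exact mem_mul nd_oneSub (mem_derivative hr0) (by omega)
  · refine Submodule.add_mem _ (Submodule.add_mem _ (Submodule.add_mem _
      (mem_mul_zero (e := 1) ?_ hw (by omega)) (mem_mul_zero (e := 1) ?_ hw (by omega)))
      (mem_mul (e := 2) ?_ (mem_derivative hw) (by omega)))
      (mem_mul (e := m + k + (k + 1)) ?_ hq3 (by omega))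
    all_goals compute_degree
  · intro x hx
    have h0 : 0 < x := hx.1
    have h1 := (one_sub_mem hx).1
    have hd := (((q2.hasDerivAt x).fun_add ((q3.hasDerivAt x).fun_mul (hasDerivAt_asin hx))).fun_add
      ((hasDerivAt_C hx (k + 1)).fun_mul (r0.hasDerivAt x))).fun_add
      (((hasDerivAt_U hx (m + k)).fun_mul (hasDerivAt_C hx (k + 1))).fun_mul (w.hasDerivAt x))
    rw [deriv_eq_of_eqOn hf hx hd]
    simp only [eval_add, eval_mul, eval_C, eval_X, eval_pow, eval_one, eval_sub]
    generalize 1 - x = y at h1 ⊢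
    push_cast
    field_simp
    ring

/-- Shape of the `k`-th derivative of what remains of stage B after multiplication by
`(1-x)^(n+1) / √(1-x)`. Without powers of `1 - x`, the degree of `w` no longer grows. -/
def StageC (a n E k : ℕ) (f : ℝ → ℝ) : Prop :=
  ∃ q ∈ degreeLT ℝ (n - k), ∃ w ∈ degreeLT ℝ E,
  ∀ x ∈ Ioo (0 : ℝ) 1, f x = eval x q + √x / x ^ (a + k) * eval x w

theorem StageC.step {a n E k : ℕ} {f : ℝ → ℝ} (hf : StageC a n E k f) :
    StageC a n E (k + 1) (deriv f) := by
  obtain ⟨q, hq, w, hw, hf⟩ := hf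
  refine ⟨derivative q, mem_derivative hq, C (1 / 2 - (a + k : ℕ) : ℝ) * w + X * derivative w, ?_, ?_⟩
  · refine Submodule.add_mem _ (mem_mul_zero (e := 0) (natDegree_C _).le hw (by omega)) ?_
    exact mem_mul (e := 1) natDegree_X_le (mem_derivative hw) (by omega)
  · intro x hx
    have h0 : 0 < x := hx.1
    have hd := (q.hasDerivAt x).fun_add ((hasDerivAt_U hx (a + k)).fun_mul (w.hasDerivAt x))
    rw [deriv_eq_of_eqOn hf hx hd]
    simp only [eval_add, eval_mul, eval_C, eval_X]
    push_cast
    field_simp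
    ring

/-- Shape of the `k`-th derivative of a polynomial of degree less than `E`. -/
def StageD (E k : ℕ) (f : ℝ → ℝ) : Prop :=
  ∃ w ∈ degreeLT ℝ (E - k), ∀ x ∈ Ioo (0 : ℝ) 1, f x = eval x w

theorem StageD.step {E k : ℕ} {f : ℝ → ℝ} (hf : StageD E k f) :
    StageD E (k + 1) (deriv f) := by
  obtain ⟨w, hw, hf⟩ := hf
  exact ⟨derivative w, mem_derivative hw, fun x hx => deriv_eq_of_eqOn hf hx (w.hasDerivAt x)⟩

/-! ### Analyticity on the interval -/

theorem analyticAt_sqrt_id {x : ℝ} (hx : x ∈ Ioo (0 : ℝ) 1) : AnalyticAt ℝ (fun x => √x) x :=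
  (Real.contDiffAt_sqrt hx.1.ne').analyticAt

theorem analyticAt_oneSub (x : ℝ) : AnalyticAt ℝ (fun x : ℝ => 1 - x) x := by fun_prop

theorem analyticAt_sqrt_oneSub {x : ℝ} (hx : x ∈ Ioo (0 : ℝ) 1) :
    AnalyticAt ℝ (fun x => √(1 - x)) x :=
  (analyticAt_sqrt_id (one_sub_mem hx)).fun_comp (f := fun x : ℝ => 1 - x) (analyticAt_oneSub x)

theorem analyticAt_arcsin_sqrt {x : ℝ} (hx : x ∈ Ioo (0 : ℝ) 1) :
    AnalyticAt ℝ (fun x => Real.arcsin √x) x := by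
  have hs : 0 ≤ √x := Real.sqrt_nonneg x
  have hs1 : √x < 1 := by rw [Real.sqrt_lt' one_pos]; simpa using hx.2
  exact (Real.contDiffAt_arcsin (by linarith) hs1.ne).analyticAt.fun_comp (analyticAt_sqrt_id hx)

theorem analyticAt_L1 {x : ℝ} (hx : x ∈ Ioo (0 : ℝ) 1) :
    AnalyticAt ℝ (fun x => Real.log ((1 + √x) / (1 - √x))) x := by
  have hs : 0 ≤ √x := Real.sqrt_nonneg x
  have hs1 : √x < 1 := by rw [Real.sqrt_lt' one_pos]; simpa using hx.2
  have hs2 : 0 < 1 - √x := by linarith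
  have h := analyticAt_sqrt_id hx
  exact ((analyticAt_const.fun_add h).fun_div (analyticAt_const.fun_sub h) hs2.ne').log
    (by positivity)

theorem analyticAt_L2 {x : ℝ} (hx : x ∈ Ioo (0 : ℝ) 1) :
    AnalyticAt ℝ (fun x => Real.log (1 - x)) x :=
  (analyticAt_oneSub x).log (one_sub_mem hx).1

/-! ### Zero bounds for the four families -/

theorem zcount_D {E : ℕ} {f : ℝ → ℝ} (hf : AnalyticOnNhd ℝ f (Ioo 0 1)) (h : StageD E 0 f) :
    ZCount f E := by
  have := ZCount.chain (P := StageD E) (N := 0) E (fun _ _ => StageD.step) ?_ hf h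
  · simpa using this
  · rintro f - ⟨w, hw, hf⟩
    have hw : w = 0 := eq_zero_of_mem le_rfl hw
    exact Or.inl fun x hx => by simp [hf x hx, hw]

theorem zcount_C {a n E : ℕ} {f : ℝ → ℝ} (hf : AnalyticOnNhd ℝ f (Ioo 0 1))
    (h : StageC a n E 0 f) : ZCount f (E + n) := by
  refine ZCount.chain (P := StageC a n E) n (fun _ _ => StageC.step) ?_ hf h
  rintro f hfa ⟨q, hq, w, hw, hf⟩
  have hq : q = 0 := eq_zero_of_mem le_rfl hq
  have hg : AnalyticOnNhd ℝ (fun x : ℝ => x ^ (a + n) / √x) (Ioo 0 1) := fun x hx =>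
    (analyticAt_id.fun_pow _).fun_div (analyticAt_sqrt_id hx) (Real.sqrt_pos.2 hx.1).ne'
  refine ZCount.of_mul hfa hg (fun x hx => ?_) (zcount_D (hg.mul hfa) ⟨w, hw, fun x hx => ?_⟩)
  · have := hx.1
    positivity
  · have h0 : 0 < x := hx.1
    have hs := Real.sqrt_pos.2 h0
    simp only [Pi.mul_apply, hf x hx, hq, eval_zero]
    field_simp
    ring

theorem zcount_B {m n E : ℕ} (hE : m + n ≤ E) {f : ℝ → ℝ} (hf : AnalyticOnNhd ℝ f (Ioo 0 1))
    (h : StageB m n E 0 f) : ZCount f (E + n + n + n) := by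
  refine ZCount.chain (P := StageB m n E) n (fun _ _ => StageB.step hE) ?_ hf h
  rintro f hfa ⟨q2, hq2, q3, hq3, r0, hr0, w, hw, hf⟩
  have hq2 : q2 = 0 := eq_zero_of_mem le_rfl hq2
  have hq3 : q3 = 0 := eq_zero_of_mem le_rfl hq3
  have hg : AnalyticOnNhd ℝ (fun x : ℝ => (1 - x) ^ (n + 1) / √(1 - x)) (Ioo 0 1) := fun x hx =>
    ((analyticAt_oneSub x).fun_pow _).fun_div (analyticAt_sqrt_oneSub hx)
      (Real.sqrt_pos.2 (one_sub_mem hx).1).ne'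
  refine ZCount.of_mul hfa hg (fun x hx => ?_)
    (zcount_C (a := m + n) (hg.mul hfa) ⟨r0, hr0, w, hw, fun x hx => ?_⟩)
  · have := (one_sub_mem hx).1
    positivity
  · have h0 : 0 < x := hx.1
    have h1 := (one_sub_mem hx).1
    have hc := Real.sqrt_pos.2 h1
    simp only [Pi.mul_apply, hf x hx, hq2, hq3, eval_zero]
    field_simp
    ring

/-- Total cost: `m`, `n`, `n` derivatives in stages A, B, C, and a final polynomial of degree less
than `D + m + n`. -/
theorem zcount_A {m n D : ℕ} (hD : n ≤ D) (hm : n ≤ m) {f : ℝ → ℝ}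
    (hf : AnalyticOnNhd ℝ f (Ioo 0 1)) (h : StageA m n D 0 f) :
    ZCount f (D + m + n + n + n + m) := by
  refine ZCount.chain (P := StageA m n D) m (fun _ _ => StageA.step hD) ?_ hf h
  rintro f hfa ⟨q0, hq0, q4, hq4, q5, hq5, r0, hr0, r2, hr2, r3, hr3, w, hw, hf⟩
  have hq0 : q0 = 0 := eq_zero_of_mem le_rfl hq0
  have hq4 : q4 = 0 := eq_zero_of_mem hm hq4
  have hq5 : q5 = 0 := eq_zero_of_mem hm hq5
  have hg : AnalyticOnNhd ℝ (fun x : ℝ => (1 - x) ^ m / √(1 - x)) (Ioo 0 1) := fun x hx =>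
    ((analyticAt_oneSub x).fun_pow _).fun_div (analyticAt_sqrt_oneSub hx)
      (Real.sqrt_pos.2 (one_sub_mem hx).1).ne'
  refine ZCount.of_mul hfa hg (fun x hx => ?_)
    (zcount_B (m := m) (by omega) (hg.mul hfa) ⟨r2, hr2, r3, hr3, r0, hr0, w, hw, fun x hx => ?_⟩)
  · have := (one_sub_mem hx).1
    positivity
  · have h0 : 0 < x := hx.1
    have h1 := (one_sub_mem hx).1
    have hc := Real.sqrt_pos.2 h1
    have e2 := Real.sq_sqrt h1.le
    simp only [Pi.mul_apply, hf x hx, hq0, hq4, hq5, eval_zero]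
    generalize √(1 - x) = c at e2 hc ⊢
    generalize 1 - x = y at e2 h1 ⊢
    subst e2
    field_simp
    ring

theorem mem_of_degree_le {q : ℝ[X]} {d d' : ℕ} (h : q.degree ≤ (d : ℕ)) (hd : d < d') :
    q ∈ degreeLT ℝ d' :=
  mem_degreeLT.2 (h.trans_lt (by exact_mod_cast hd))

end ZeroBound

open Polynomial Set ZeroBound

theorem zero_bound_theorem_4_2
    (n : ℕ) (hn : 3 ≤ n) (m : ℕ) (hm : m = n + (n - 1) / 2)
    (Q0 Q1 Q2 Q3 Q4 Q5 : Polynomial ℝ)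
    (hQ0 : Q0.degree ≤ (m - 1 : ℕ)) (hQ1 : Q1.degree ≤ (n - 2 + n / 2 : ℕ))
    (hQ2 : Q2.degree ≤ (n - 1 : ℕ)) (hQ3 : Q3.degree ≤ (n - 1 : ℕ))
    (hQ4 : Q4.degree ≤ (n - 1 : ℕ)) (hQ5 : Q5.degree ≤ (n - 1 : ℕ))
    (M : ℝ → ℝ)
    (hM : ∀ h ∈ Set.Ioo (0 : ℝ) 1, M h =
      (h - 1) ^ (-((n : ℤ) - 2)) *
        (Q0.eval h + Q1.eval h * Real.sqrt h + Q2.eval h * Real.sqrt (1 - h)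
          + Q3.eval h * (Real.sqrt (1 - h) * Real.arcsin (Real.sqrt h))
          + Q4.eval h * Real.log ((1 + Real.sqrt h) / (1 - Real.sqrt h))
          + Q5.eval h * Real.log (1 - h))) :
    ZerosLE M (Set.Ioo 0 1) (15 * n - 11) := by
  have hne : ∀ x ∈ Ioo (0 : ℝ) 1, x - 1 ≠ 0 := fun x hx => (sub_neg.2 hx.2).ne
  have hzpow : ∀ e : ℤ, AnalyticOnNhd ℝ (fun x : ℝ => (x - 1) ^ e) (Ioo 0 1) := fun e x hx =>
    (analyticAt_id.fun_sub analyticAt_const).fun_zpow (hne x hx)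
  have hMa : AnalyticOnNhd ℝ M (Ioo 0 1) := by
    intro x hx
    have hp : ∀ Q : ℝ[X], AnalyticAt ℝ (fun x => Q.eval x) x := fun Q =>
      AnalyticOnNhd.eval_polynomial (A := ℝ) Q x (mem_univ _)
    have hF := (hzpow (-((n : ℤ) - 2)) x hx).fun_mul
      ((((((hp Q0).fun_add ((hp Q1).fun_mul (analyticAt_sqrt_id hx))).fun_add
        ((hp Q2).fun_mul (analyticAt_sqrt_oneSub hx))).fun_add
        ((hp Q3).fun_mul ((analyticAt_sqrt_oneSub hx).fun_mul (analyticAt_arcsin_sqrt hx)))).fun_add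
        ((hp Q4).fun_mul (analyticAt_L1 hx))).fun_add ((hp Q5).fun_mul (analyticAt_L2 hx)))
    refine hF.congr ?_
    exact Filter.eventually_of_mem (isOpen_Ioo.mem_nhds hx) fun y hy => (hM y hy).symm
  -- Clearing the prefactor turns `M` into a function of stage A at `k = 0`.
  have hg := hzpow ((n : ℤ) - 2)
  have hZ : ZCount M (15 * n - 11) := by
    refine ZCount.of_mul hMa hg (fun x hx => zpow_ne_zero _ (hne x hx)) ?_
    refine (zcount_A (m := m) (n := n) (D := n - 1 + n / 2) (by omega) (by omega)
      (hg.mul hMa) ⟨Q0, mem_of_degree_le hQ0 (by omega), Q4, mem_of_degree_le hQ4 (by omega),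
        Q5, mem_of_degree_le hQ5 (by omega), 0, Submodule.zero_mem _,
        Q2, mem_of_degree_le hQ2 (by omega), Q3, mem_of_degree_le hQ3 (by omega),
        Q1, mem_of_degree_le hQ1 (by omega), fun x hx => ?_⟩).mono (by omega)
    change (x - 1) ^ ((n : ℤ) - 2) * M x = _
    rw [hM x hx, ← mul_assoc, ← zpow_add₀ (hne x hx)]
    simp
    ring
  exact fun s l hs hl => hZ.zerosLE_aux hMa s l hs hl
end
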